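/- sum_{n=0}^∞ binom(2n,n)^3 / 64^n = π / Γ(3/4)^4. -/

import Mathlib

/-!
The `k`-th term `t a k` of Dixon's well-poised series `₃F₂(a, b, c; 1 + a - b, 1 + a - c; 1)` has
a Wilf–Zeilberger mate for the shift `a ↦ a + 2`: for the rational function `R` below,
`R a * t (a + 2) k - t a k` telescopes in `k`, so the sum `S a` satisfies `S a = R a * S (a + 2)`.
Since `S x → 1` as `x → ∞`, `S a` is the infinite product of the `R (a + 2 * j)`, which Euler's
limit formula evaluates by `Γ`. Ramanujan's series is Dixon's at `a = b = c = 1 / 2`.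
-/

open Filter Topology Finset Real

lemma tendsto_inv_GammaSeq (s : ℝ) :
    Tendsto (fun n => (GammaSeq s n)⁻¹) atTop (𝓝 (Gamma s)⁻¹) := by
  by_cases hs : Gamma s = 0
  · obtain ⟨m, rfl⟩ := (Gamma_eq_zero_iff s).1 hs
    -- Mathlib's `Γ` and `GammaSeq` vanish at the poles, so both inverses are `0`, as `1 / Γ` is.
    rw [hs, inv_zero]
    refine tendsto_const_nhds.congr' ?_
    filter_upwards [eventually_ge_atTop m] with n hmn
    have hprod : ∏ j ∈ range (n + 1), (-(m : ℝ) + j) = 0 :=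
      prod_eq_zero (mem_range.2 (Nat.lt_succ_of_le hmn)) (neg_add_cancel _)
    rw [GammaSeq, hprod, div_zero, inv_zero]
  · exact (GammaSeq_tendsto_Gamma s).inv₀ hs

/-- The quotient `∏ᵢ (uᵢ)ₙ / (vᵢ)ₙ` of rising factorials, the general coefficient of a
hypergeometric series. The customary factor `n!` in the denominator is not built in: it is an
entry `1` of `v`. -/
noncomputable def risingQuotient {ι : Type*} [Fintype ι] (u v : ι → ℝ) (n : ℕ) : ℝ :=
  ∏ j ∈ range n, ∏ i, (u i + j) / (v i + j)

section RisingQuotient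

variable {ι : Type*} [Fintype ι] {u v : ι → ℝ}

lemma rpow_mul_risingQuotient_succ {n : ℕ} (hn : n ≠ 0) :
    (n : ℝ) ^ (∑ i, (v i - u i)) * risingQuotient u v (n + 1) =
      ∏ i, GammaSeq (v i) n * (GammaSeq (u i) n)⁻¹ := by
  have hn' : (0 : ℝ) < n := by positivity
  rw [risingQuotient, Finset.prod_comm, rpow_sum_of_pos hn', ← prod_mul_distrib]
  refine prod_congr rfl fun i _ => ?_
  rw [prod_div_distrib, rpow_sub hn', GammaSeq, GammaSeq, inv_div]
  field_simp

lemma tendsto_rpow_mul_risingQuotient_succ :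
    Tendsto (fun n : ℕ => (n : ℝ) ^ (∑ i, (v i - u i)) * risingQuotient u v (n + 1)) atTop
      (𝓝 (∏ i, Gamma (v i) / Gamma (u i))) := by
  have hlim := tendsto_finsetProd univ fun i _ =>
    (GammaSeq_tendsto_Gamma (v i)).mul (tendsto_inv_GammaSeq (u i))
  refine hlim.congr' ?_
  filter_upwards [eventually_ne_atTop 0] with n hn
  exact (rpow_mul_risingQuotient_succ hn).symm

lemma tendsto_risingQuotient_of_sum_eq (h : ∑ i, u i = ∑ i, v i) :
    Tendsto (risingQuotient u v) atTop (𝓝 (∏ i, Gamma (v i) / Gamma (u i))) := by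
  have hlim := tendsto_rpow_mul_risingQuotient_succ (u := u) (v := v)
  simp only [sum_sub_distrib, h, sub_self, rpow_zero, one_mul] at hlim
  exact (tendsto_add_atTop_iff_nat 1).1 hlim

lemma risingQuotient_succ_isBigO :
    (fun n => risingQuotient u v (n + 1)) =O[atTop]
      fun n : ℕ => (n : ℝ) ^ (-∑ i, (v i - u i)) := by
  have hbounded := (tendsto_rpow_mul_risingQuotient_succ (u := u) (v := v)).isBigO_one ℝ
  refine ((Asymptotics.isBigO_refl (fun n : ℕ => (n : ℝ) ^ (-∑ i, (v i - u i))) atTop).mul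
    hbounded).congr' ?_ ?_
  · filter_upwards [eventually_gt_atTop 0] with n hn
    have hn' : (0 : ℝ) < n := by positivity
    rw [← mul_assoc, ← rpow_add hn', neg_add_cancel, rpow_zero, one_mul]
  · exact .of_forall fun n => mul_one _

lemma summable_risingQuotient (h : 1 < ∑ i, (v i - u i)) : Summable (risingQuotient u v) := by
  rw [← summable_nat_add_iff 1]
  exact summable_of_isBigO_nat (summable_nat_rpow.2 (neg_lt_neg h)) risingQuotient_succ_isBigO

lemma tendsto_natCast_mul_risingQuotient (h : 1 < ∑ i, (v i - u i)) :
    Tendsto (fun n : ℕ => n * risingQuotient u v n) atTop (𝓝 0) := by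
  rw [← tendsto_add_atTop_iff_nat 1]
  have hmul : Tendsto (fun n : ℕ => n * risingQuotient u v (n + 1)) atTop (𝓝 0) := by
    have hpow : Tendsto (fun n : ℕ => (n : ℝ) ^ (-(∑ i, (v i - u i) - 1))) atTop (𝓝 0) :=
      (tendsto_rpow_neg_atTop (sub_pos.2 h)).comp tendsto_natCast_atTop_atTop
    refine ((Asymptotics.isBigO_refl (fun n : ℕ => (n : ℝ)) atTop).mul
      risingQuotient_succ_isBigO).trans_tendsto (hpow.congr' ?_)
    filter_upwards [eventually_gt_atTop 0] with n hn
    have hn' : (0 : ℝ) < n := by positivity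
    rw [neg_sub, sub_eq_add_neg, rpow_add hn', rpow_one]
  have hterm := (summable_risingQuotient h).tendsto_atTop_zero.comp (tendsto_add_atTop_nat 1)
  simpa [add_mul] using hmul.add hterm

end RisingQuotient

/-- The `k`-th term of Dixon's well-poised series `₃F₂(a, b, c; 1 + a - b, 1 + a - c; 1)`. -/
noncomputable def dixonTerm (a b c : ℝ) : ℕ → ℝ :=
  risingQuotient ![a, b, c] ![1, 1 + a - b, 1 + a - c]

/-- The quotient of Dixon's sums at `a` and at `a + 2`. -/
noncomputable def dixonRatio (a b c : ℝ) : ℝ :=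
  (a + 1) * ((1 + a - b - c) * (2 + a - b - c) * (2 + a - 2 * b) * (2 + a - 2 * c)) /
    ((2 + a - 2 * b - 2 * c) * (1 + a - b) * (2 + a - b) * (1 + a - c) * (2 + a - c))

/-- The Wilf–Zeilberger mate of `dixonTerm` for the shift `a ↦ a + 2`, with the certificate split
into quotients that visibly stay bounded as `k → ∞`. -/
noncomputable def dixonMate (a b c : ℝ) (k : ℕ) : ℝ :=
  k * dixonTerm a b c k *
    ((a + k) / (1 + a - b + k) * ((3 + 2 * a - 2 * b - 2 * c + k) / (1 + a - c + k)) /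
        (2 + a - 2 * b - 2 * c) -
      (1 - b) * (1 - c) / a * ((1 + a - b + k)⁻¹ * (1 + a - c + k)⁻¹))

/-- The parameters off the poles of Dixon's series, of its Wilf–Zeilberger mate and of its closed
form, a condition stable under `a ↦ a + 2`. -/
structure DixonRegular (a b c : ℝ) : Prop where
  add_natCast_ne_zero (k : ℕ) : a + k ≠ 0
  left_ne_zero (k : ℕ) : 1 + a - b + k ≠ 0
  right_ne_zero (k : ℕ) : 1 + a - c + k ≠ 0

section Dixon

variable {a b c : ℝ}

lemma DixonRegular.left_succ_ne_zero (hreg : DixonRegular a b c) (k : ℕ) :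
    2 + a - b + k ≠ 0 := by
  convert hreg.left_ne_zero (k + 1) using 1; push_cast; ring

lemma DixonRegular.right_succ_ne_zero (hreg : DixonRegular a b c) (k : ℕ) :
    2 + a - c + k ≠ 0 := by
  convert hreg.right_ne_zero (k + 1) using 1; push_cast; ring

lemma DixonRegular.add_two_mul (h : DixonRegular a b c) (n : ℕ) :
    DixonRegular (a + 2 * n) b c where
  add_natCast_ne_zero k := by
    convert h.add_natCast_ne_zero (2 * n + k) using 1; push_cast; ring
  left_ne_zero k := by convert h.left_ne_zero (2 * n + k) using 1; push_cast; ring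
  right_ne_zero k := by convert h.right_ne_zero (2 * n + k) using 1; push_cast; ring

lemma dixonTerm_zero : dixonTerm a b c 0 = 1 := by
  rw [dixonTerm, risingQuotient, prod_range_zero]

lemma dixonTerm_succ (k : ℕ) :
    dixonTerm a b c (k + 1) = dixonTerm a b c k *
      ((a + k) / (1 + k) * ((b + k) / (1 + a - b + k)) * ((c + k) / (1 + a - c + k))) := by
  rw [dixonTerm, risingQuotient, prod_range_succ, Fin.prod_univ_three]
  rfl

lemma one_lt_dixon_parametric_excess (h : 2 * b + 2 * c < 2 + a) :
    1 < ∑ i, (![1, 1 + a - b, 1 + a - c] i - ![a, b, c] i) := by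
  simp only [Fin.sum_univ_three, Matrix.cons_val]
  linarith

lemma summable_dixonTerm (h : 2 * b + 2 * c < 2 + a) : Summable (dixonTerm a b c) :=
  summable_risingQuotient (one_lt_dixon_parametric_excess h)

lemma dixonTerm_add_two (hreg : DixonRegular a b c) (k : ℕ) :
    dixonTerm (a + 2) b c k = dixonTerm a b c k *
      ((a + k) * (a + k + 1) / (a * (a + 1)) *
        ((1 + a - b) * (2 + a - b) / ((1 + a - b + k) * (2 + a - b + k))) *
        ((1 + a - c) * (2 + a - c) / ((1 + a - c + k) * (2 + a - c + k)))) := by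
  have ha0 := hreg.add_natCast_ne_zero 0
  have ha1 := hreg.add_natCast_ne_zero 1
  have hb0 := hreg.left_ne_zero 0
  have hb1 := hreg.left_succ_ne_zero 0
  have hc0 := hreg.right_ne_zero 0
  have hc1 := hreg.right_succ_ne_zero 0
  simp only [Nat.cast_zero, Nat.cast_one, add_zero] at ha0 ha1 hb0 hb1 hc0 hc1
  induction k with
  | zero =>
    simp only [dixonTerm_zero, Nat.cast_zero, add_zero]
    field_simp
  | succ k ih =>
    have hbk := hreg.left_ne_zero k
    have hbk1 := hreg.left_succ_ne_zero k
    have hbk2 := hreg.left_succ_ne_zero (k + 1)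
    have hck := hreg.right_ne_zero k
    have hck1 := hreg.right_succ_ne_zero k
    have hck2 := hreg.right_succ_ne_zero (k + 1)
    rw [dixonTerm_succ, dixonTerm_succ, ih]
    push_cast at hbk2 hck2 ⊢
    rw [show 1 + (a + 2) - b + (k : ℝ) = 2 + a - b + (k + 1) by ring,
      show 1 + (a + 2) - c + (k : ℝ) = 2 + a - c + (k + 1) by ring,
      show 1 + a - b + ((k : ℝ) + 1) = 2 + a - b + k by ring,
      show 1 + a - c + ((k : ℝ) + 1) = 2 + a - c + k by ring]
    field_simp
    ring

lemma dixonRatio_mul_dixonTerm_add_two (hreg : DixonRegular a b c) (k : ℕ) :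
    dixonRatio a b c * dixonTerm (a + 2) b c k = dixonTerm a b c k *
      ((a + k) * (a + k + 1) *
        ((1 + a - b - c) * (2 + a - b - c) * (2 + a - 2 * b) * (2 + a - 2 * c)) /
        (a * (2 + a - 2 * b - 2 * c) * (1 + a - b + k) * (2 + a - b + k) *
          (1 + a - c + k) * (2 + a - c + k))) := by
  have ha1 := hreg.add_natCast_ne_zero 1
  have hb0 := hreg.left_ne_zero 0
  have hb1 := hreg.left_succ_ne_zero 0
  have hc0 := hreg.right_ne_zero 0
  have hc1 := hreg.right_succ_ne_zero 0
  simp only [Nat.cast_zero, Nat.cast_one, add_zero] at ha1 hb0 hb1 hc0 hc1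
  rw [dixonTerm_add_two hreg, dixonRatio]
  clear hreg
  generalize (1 + a - b - c) * (2 + a - b - c) * (2 + a - 2 * b) * (2 + a - 2 * c) = N
  generalize 2 + a - 2 * b - 2 * c = σ
  generalize 1 + a - b = P, 2 + a - b = P', 1 + a - c = Q, 2 + a - c = Q' at *
  field_simp

lemma dixonMate_succ_sub (hreg : DixonRegular a b c) (h : 2 * b + 2 * c < 2 + a) (k : ℕ) :
    dixonMate a b c (k + 1) - dixonMate a b c k =
      dixonRatio a b c * dixonTerm (a + 2) b c k - dixonTerm a b c k := by
  have hs : 2 + a - 2 * b - 2 * c ≠ 0 := by linarith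
  have ha : a ≠ 0 := by simpa using hreg.add_natCast_ne_zero 0
  have hb := hreg.left_ne_zero k
  have hb' := hreg.left_succ_ne_zero k
  have hc := hreg.right_ne_zero k
  have hc' := hreg.right_succ_ne_zero k
  rw [dixonRatio_mul_dixonTerm_add_two hreg, dixonMate, dixonMate, dixonTerm_succ]
  push_cast
  rw [show 1 + a - b + ((k : ℝ) + 1) = 2 + a - b + k by ring,
    show 1 + a - c + ((k : ℝ) + 1) = 2 + a - c + k by ring]
  clear hreg h
  generalize dixonTerm a b c k = t
  generalize hP : 1 + a - b + (k : ℝ) = P at *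
  generalize hP' : 2 + a - b + (k : ℝ) = P' at *
  generalize hQ : 1 + a - c + (k : ℝ) = Q at *
  generalize hQ' : 2 + a - c + (k : ℝ) = Q' at *
  generalize hσ : 2 + a - 2 * b - 2 * c = σ at *
  field_simp
  subst hP hP' hQ hQ' hσ
  ring

lemma tendsto_dixonMate (h : 2 * b + 2 * c < 2 + a) :
    Tendsto (dixonMate a b c) atTop (𝓝 0) := by
  have hterm : Tendsto (fun k : ℕ => k * dixonTerm a b c k) atTop (𝓝 0) :=
    tendsto_natCast_mul_risingQuotient (one_lt_dixon_parametric_excess h)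
  have hquot (s t : ℝ) : Tendsto (fun k : ℕ => (s + k) / (t + k)) atTop (𝓝 1) := by
    simpa using tendsto_add_mul_div_add_mul_atTop_nhds s t 1 one_ne_zero
  have hinv (t : ℝ) : Tendsto (fun k : ℕ => (t + k)⁻¹) atTop (𝓝 0) :=
    tendsto_inv_atTop_zero.comp (tendsto_atTop_add_const_left _ t tendsto_natCast_atTop_atTop)
  have hlim := hterm.mul ((((hquot a (1 + a - b)).mul
    (hquot (3 + 2 * a - 2 * b - 2 * c) (1 + a - c))).div_const (2 + a - 2 * b - 2 * c)).sub
    (((hinv (1 + a - b)).mul (hinv (1 + a - c))).const_mul ((1 - b) * (1 - c) / a)))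
  rwa [zero_mul] at hlim

lemma sum_range_dixonRatio_mul_sub (hreg : DixonRegular a b c) (h : 2 * b + 2 * c < 2 + a) (n : ℕ) :
    ∑ k ∈ range n, (dixonRatio a b c * dixonTerm (a + 2) b c k - dixonTerm a b c k) =
      dixonMate a b c n := by
  have hzero : dixonMate a b c 0 = 0 := by simp [dixonMate]
  simp_rw [← dixonMate_succ_sub hreg h]
  rw [sum_range_sub, hzero, sub_zero]

lemma tsum_dixonTerm_eq_dixonRatio_mul (hreg : DixonRegular a b c)
    (h : 2 * b + 2 * c < 2 + a) :
    ∑' k, dixonTerm a b c k = dixonRatio a b c * ∑' k, dixonTerm (a + 2) b c k := by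
  have hshift : Summable (dixonTerm (a + 2) b c) := summable_dixonTerm (by linarith)
  have hsum := ((hshift.hasSum.mul_left (dixonRatio a b c)).sub
    (summable_dixonTerm h).hasSum).tendsto_sum_nat
  simp_rw [sum_range_dixonRatio_mul_sub hreg h] at hsum
  exact (sub_eq_zero.1 (tendsto_nhds_unique hsum (tendsto_dixonMate h))).symm

lemma tsum_dixonTerm_eq_prod_mul (hreg : DixonRegular a b c) (h : 2 * b + 2 * c < 2 + a)
    (n : ℕ) :
    ∑' k, dixonTerm a b c k =
      (∏ j ∈ range n, dixonRatio (a + 2 * j) b c) * ∑' k, dixonTerm (a + 2 * n) b c k := by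
  induction n with
  | zero => simp
  | succ n ih =>
    have h_add : 2 * b + 2 * c < 2 + (a + 2 * n) := by linarith [(n.cast_nonneg : (0 : ℝ) ≤ n)]
    rw [ih, prod_range_succ, tsum_dixonTerm_eq_dixonRatio_mul (hreg.add_two_mul n) h_add,
      mul_assoc]
    push_cast
    ring_nf

lemma div_add_mul_add_le_of_le {x y β γ : ℝ} (hβ : |β| < x) (hγ : |γ| < x) (hxy : x ≤ y) :
    y / ((y + β) * (y + γ)) ≤ x / ((x + β) * (x + γ)) := by
  have hβ' := neg_lt_of_abs_lt hβ
  have hγ' := neg_lt_of_abs_lt hγ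
  have hx : 0 < x := (abs_nonneg β).trans_lt hβ
  have hβγ : β * γ ≤ x * y := calc
    β * γ ≤ |β| * |γ| := (le_abs_self _).trans_eq (abs_mul β γ)
    _ ≤ x * x := by gcongr
    _ ≤ x * y := by gcongr
  have hxβ : 0 < x + β := by linarith
  have hxγ : 0 < x + γ := by linarith
  have hyβ : 0 < y + β := by linarith
  have hyγ : 0 < y + γ := by linarith
  rw [div_le_div_iff₀ (by positivity) (by positivity), ← sub_nonneg]
  calc 0 ≤ (y - x) * (x * y - β * γ) := mul_nonneg (sub_nonneg.2 hxy) (sub_nonneg.2 hβγ)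
    _ = _ := by ring

lemma abs_dixonTerm_le_abs_dixonTerm {x y : ℝ} (hb : |1 - b| < x) (hc : |1 - c| < x)
    (hxy : x ≤ y) (k : ℕ) : |dixonTerm y b c k| ≤ |dixonTerm x b c k| := by
  have hb' := neg_lt_of_abs_lt hb
  have hc' := neg_lt_of_abs_lt hc
  induction k with
  | zero => simp only [dixonTerm_zero, le_refl]
  | succ k ih =>
    have hxk : x ≤ x + k := le_add_of_nonneg_right k.cast_nonneg
    have hfactor (z : ℝ) (hz : x ≤ z) :
        |(z + k) / (1 + k) * ((b + k) / (1 + z - b + k)) * ((c + k) / (1 + z - c + k))| =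
          |(b + k) * (c + k)| / (1 + k) *
            ((z + k) / ((z + k + (1 - b)) * (z + k + (1 - c)))) := by
      have hz0 : 0 < z + k := by linarith [abs_nonneg (1 - b)]
      have hzb : 0 < z + k + (1 - b) := by linarith
      have hzc : 0 < z + k + (1 - c) := by linarith
      rw [show 1 + z - b + (k : ℝ) = z + k + (1 - b) by ring,
        show 1 + z - c + (k : ℝ) = z + k + (1 - c) by ring]
      simp only [abs_mul, abs_div, abs_of_pos hz0, abs_of_pos hzb, abs_of_pos hzc,
        abs_of_pos (show (0 : ℝ) < 1 + k by positivity)]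
      field_simp
    rw [dixonTerm_succ, dixonTerm_succ, abs_mul (dixonTerm y b c k), abs_mul (dixonTerm x b c k),
      hfactor x le_rfl, hfactor y hxy]
    have hratio := div_add_mul_add_le_of_le (hb.trans_le hxk) (hc.trans_le hxk)
      (add_le_add_left hxy (k : ℝ))
    refine mul_le_mul ih (by gcongr) ?_ (abs_nonneg _)
    rw [← hfactor y hxy]
    exact abs_nonneg _

lemma tendsto_dixonTerm_atTop (b c : ℝ) (k : ℕ) :
    Tendsto (fun x => dixonTerm x b c k) atTop (𝓝 (0 ^ k)) := by
  induction k with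
  | zero => simp only [dixonTerm_zero, pow_zero, tendsto_const_nhds]
  | succ k ih =>
    have hden (t : ℝ) : Tendsto (fun x : ℝ => 1 + x - t + k) atTop atTop :=
      tendsto_atTop_add_const_right _ _ <| tendsto_atTop_add_const_right _ _ <|
        tendsto_atTop_add_const_left _ _ tendsto_id
    have hquot : Tendsto (fun x : ℝ => (x + k) / (1 + x - b + k)) atTop (𝓝 1) := by
      have hlim := (tendsto_const_nhds (x := (1 : ℝ))).sub
        ((hden b).const_div_atTop (1 - b))
      rw [sub_zero] at hlim
      refine hlim.congr' ?_
      filter_upwards [(hden b).eventually_ne_atTop 0] with x hx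
      field_simp
      ring
    have hlim := ih.mul ((hquot.const_mul ((b + k) / (1 + k))).mul
      ((hden c).const_div_atTop (c + k)))
    rw [mul_zero, mul_zero, ← zero_pow k.succ_ne_zero] at hlim
    refine hlim.congr fun x => ?_
    rw [dixonTerm_succ]
    ring

lemma tendsto_tsum_dixonTerm_atTop (b c : ℝ) :
    Tendsto (fun x => ∑' k, dixonTerm x b c k) atTop (𝓝 1) := by
  obtain ⟨x, hb, hc, hx⟩ := ((eventually_gt_atTop |1 - b|).and
    ((eventually_gt_atTop |1 - c|).and (eventually_gt_atTop (2 * b + 2 * c - 2)))).exists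
  have hsum : Summable fun k => |dixonTerm x b c k| := (summable_dixonTerm (by linarith)).abs
  have hlim := tendsto_tsum_of_dominated_convergence hsum (tendsto_dixonTerm_atTop b c)
    ((eventually_ge_atTop x).mono fun _ hxy => abs_dixonTerm_le_abs_dixonTerm hb hc hxy)
  rwa [tsum_geometric_of_lt_one le_rfl one_pos, sub_zero, inv_one] at hlim

lemma prod_range_dixonRatio (a b c : ℝ) (n : ℕ) :
    ∏ j ∈ range n, dixonRatio (a + 2 * j) b c =
      risingQuotient
        ![(1 + a) / 2, (1 + a - b - c) / 2, (1 + a - b - c) / 2 + 1 / 2, 1 + a / 2 - b,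
          1 + a / 2 - c]
        ![1 + a / 2 - b - c, (1 + a - b) / 2, (1 + a - b) / 2 + 1 / 2, (1 + a - c) / 2,
          (1 + a - c) / 2 + 1 / 2] n := by
  refine prod_congr rfl fun j _ => ?_
  simp only [Fin.prod_univ_five, Matrix.cons_val, div_mul_div_comm]
  rw [dixonRatio, ← mul_div_mul_left _ _ (show (1 / 32 : ℝ) ≠ 0 by norm_num)]
  congr 1 <;> ring

lemma dixon_Gamma_duplication (b c : ℝ) (ha : ∀ k : ℕ, a + k ≠ 0) :
    Gamma (1 + a / 2 - b - c) / Gamma ((1 + a) / 2) *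
      (Gamma ((1 + a - b) / 2) / Gamma ((1 + a - b - c) / 2)) *
      (Gamma ((1 + a - b) / 2 + 1 / 2) / Gamma ((1 + a - b - c) / 2 + 1 / 2)) *
      (Gamma ((1 + a - c) / 2) / Gamma (1 + a / 2 - b)) *
      (Gamma ((1 + a - c) / 2 + 1 / 2) / Gamma (1 + a / 2 - c)) =
    Gamma (1 + a / 2) * Gamma (1 + a / 2 - b - c) * Gamma (1 + a - b) *
      Gamma (1 + a - c) / (Gamma (1 + a) * Gamma (1 + a - b - c) *
        Gamma (1 + a / 2 - b) * Gamma (1 + a / 2 - c)) := by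
  have hΓ : Gamma (1 + a / 2) ≠ 0 := Gamma_ne_zero fun m hm =>
    ha (2 * m + 2) (by push_cast; linarith)
  have hdup (s : ℝ) : Gamma (s / 2) * Gamma (s / 2 + 1 / 2) =
      Gamma s * 2 ^ (1 - s) * √π := by
    rw [Gamma_mul_Gamma_add_half, mul_div_cancel₀ _ two_ne_zero]
  have hpow : (2 : ℝ) ^ (1 - (1 + a - c)) =
      2 ^ (1 - (1 + a)) * 2 ^ (1 - (1 + a - b - c)) / 2 ^ (1 - (1 + a - b)) := by
    rw [← rpow_add two_pos, ← rpow_sub two_pos]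
    ring_nf
  have hhalf : Gamma ((1 + a) / 2) =
      Gamma (1 + a) * 2 ^ (1 - (1 + a)) * √π / Gamma (1 + a / 2) := by
    rw [← hdup, show (1 + a) / 2 + 1 / 2 = 1 + a / 2 by ring, mul_div_cancel_right₀ _ hΓ]
  calc _ = Gamma (1 + a / 2 - b - c) *
          (Gamma ((1 + a - b) / 2) * Gamma ((1 + a - b) / 2 + 1 / 2)) *
          (Gamma ((1 + a - c) / 2) * Gamma ((1 + a - c) / 2 + 1 / 2)) /
        (Gamma ((1 + a) / 2) *
          (Gamma ((1 + a - b - c) / 2) * Gamma ((1 + a - b - c) / 2 + 1 / 2)) *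
          Gamma (1 + a / 2 - b) * Gamma (1 + a / 2 - c)) := by ring
    _ = _ := by
      rw [hdup, hdup, hdup, hhalf, hpow]
      field_simp

lemma tendsto_prod_range_dixonRatio (b c : ℝ) (ha : ∀ k : ℕ, a + k ≠ 0) :
    Tendsto (fun n : ℕ => ∏ j ∈ range n, dixonRatio (a + 2 * j) b c) atTop
      (𝓝 (Gamma (1 + a / 2) * Gamma (1 + a / 2 - b - c) * Gamma (1 + a - b) *
        Gamma (1 + a - c) / (Gamma (1 + a) * Gamma (1 + a - b - c) *
          Gamma (1 + a / 2 - b) * Gamma (1 + a / 2 - c)))) := by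
  simp_rw [prod_range_dixonRatio, ← dixon_Gamma_duplication b c ha]
  convert! tendsto_risingQuotient_of_sum_eq ?_ using 2
  · simp only [Fin.prod_univ_five, Matrix.cons_val]
  · simp only [Fin.sum_univ_five, Matrix.cons_val]
    ring

theorem hasSum_dixonTerm (hreg : DixonRegular a b c) (h : 2 * b + 2 * c < 2 + a) :
    HasSum (dixonTerm a b c)
      (Gamma (1 + a / 2) * Gamma (1 + a / 2 - b - c) * Gamma (1 + a - b) *
        Gamma (1 + a - c) / (Gamma (1 + a) * Gamma (1 + a - b - c) *
          Gamma (1 + a / 2 - b) * Gamma (1 + a / 2 - c))) := by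
  have hshift : Tendsto (fun n : ℕ => a + 2 * (n : ℝ)) atTop atTop :=
    tendsto_atTop_add_const_left _ a (tendsto_natCast_atTop_atTop.const_mul_atTop two_pos)
  have hlim := (tendsto_prod_range_dixonRatio b c hreg.add_natCast_ne_zero).mul
    ((tendsto_tsum_dixonTerm_atTop b c).comp hshift)
  simp only [Function.comp_def, ← tsum_dixonTerm_eq_prod_mul hreg h, mul_one] at hlim
  rw [← tendsto_nhds_unique tendsto_const_nhds hlim]
  exact (summable_dixonTerm h).hasSum

lemma dixonTerm_one_half (k : ℕ) :
    dixonTerm (1 / 2) (1 / 2) (1 / 2) k = ((2 * k).choose k : ℝ) ^ 3 / 64 ^ k := by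
  rw [← Nat.centralBinom_eq_two_mul_choose]
  induction k with
  | zero => simp [dixonTerm_zero]
  | succ k ih =>
    have hrec : (k + 1 : ℝ) * (k + 1).centralBinom = 2 * (2 * k + 1) * k.centralBinom := by
      exact_mod_cast k.succ_mul_centralBinom_succ
    rw [dixonTerm_succ, ih, eq_div_of_mul_eq (by positivity) ((mul_comm _ _).trans hrec)]
    field_simp
    ring

end Dixon

lemma Gamma_one_fourth_mul_Gamma_three_fourths :
    Gamma (1 / 4) * Gamma (3 / 4) = √2 * π := by
  rw [show (3 / 4 : ℝ) = 1 - 1 / 4 by norm_num, Gamma_mul_Gamma_one_sub,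
    mul_one_div, sin_pi_div_four]
  field_simp
  rw [sq_sqrt zero_le_two]

lemma Gamma_five_fourths_mul_Gamma_one_fourth_div :
    Gamma (5 / 4) * Gamma (1 / 4) /
      (Gamma (3 / 2) * Gamma (1 / 2) * Gamma (3 / 4) * Gamma (3 / 4)) =
      π / Gamma (3 / 4) ^ 4 := by
  have h34 : Gamma (3 / 4) ≠ 0 := (Gamma_pos_of_pos (by norm_num)).ne'
  have h14 := eq_div_of_mul_eq h34 Gamma_one_fourth_mul_Gamma_three_fourths
  rw [show (5 / 4 : ℝ) = 1 / 4 + 1 by norm_num, show (3 / 2 : ℝ) = 1 / 2 + 1 by norm_num,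
    Gamma_add_one (by norm_num), Gamma_add_one (by norm_num), Gamma_one_half_eq, h14]
  field_simp
  rw [sq_sqrt zero_le_two, sq_sqrt pi_nonneg]
  ring

/-- Ramanujan: `∑ binom(2n,n)³/64ⁿ = π/Γ(3/4)⁴`. -/
theorem sum_centralBinom_cube_div_64_pow :
    ∑' n : ℕ, ((2 * n).choose n : ℝ) ^ 3 / 64 ^ n = Real.pi / (Real.Gamma (3 / 4)) ^ 4 := by
  have hreg : DixonRegular (1 / 2) (1 / 2) (1 / 2) := by
    constructor <;> intro k <;> positivity
  have hdixon := (hasSum_dixonTerm hreg (by norm_num)).tsum_eq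
  simp_rw [dixonTerm_one_half] at hdixon
  rw [hdixon, ← Gamma_five_fourths_mul_Gamma_one_fourth_div]
  norm_num1
  rw [Gamma_one, mul_one, mul_one]
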